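/- The number of linked partitions of [n] with crossing number x, nesting number y, left-component set S and right-component set T equals the number of linked partitions of [n] with crossing number y, nesting number x, left-component set S and right-component set T. -/

import Mathlib

/-- A linked partition of `[n]` (elements modelled as `Fin n`): a collection of
nonempty blocks covering `[n]` such that any two distinct blocks are nearly
disjoint: every common element `t` is the minimum of one of the two blocks, that
block has size `> 1`, and `t` is not the minimum of the other block. -/
structure LinkedPartition (n : ℕ) where
  blocks : Finset (Finset (Fin n))
  nonempty : ∀ B ∈ blocks, B.Nonempty
  cover : ∀ i : Fin n, ∃ B ∈ blocks, i ∈ B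
  nearlyDisjoint : ∀ B ∈ blocks, ∀ C ∈ blocks, B ≠ C → ∀ t ∈ B ∩ C,
    ((∀ b ∈ B, t ≤ b) ∧ 1 < B.card ∧ ∃ c ∈ C, c < t) ∨
    ((∀ c ∈ C, t ≤ c) ∧ 1 < C.card ∧ ∃ b ∈ B, b < t)

namespace LinkedPartition

variable {n : ℕ}

/-- The standard representation: the pairs `(min B, b)` over all blocks `B` and all
`b ∈ B` with `b ≠ min B`. -/
def stdRep (P : LinkedPartition n) : Set (Fin n × Fin n) :=
  {p | ∃ B ∈ P.blocks, p.1 ∈ B ∧ p.2 ∈ B ∧ (∀ b ∈ B, p.1 ≤ b) ∧ p.1 < p.2}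

/-- The crossing number: the largest `k` such that the standard representation
contains pairs `(i_1,j_1), …, (i_k,j_k)` with `i_1 < ⋯ < i_k < j_1 < ⋯ < j_k`. -/
noncomputable def cross (P : LinkedPartition n) : ℕ :=
  sSup {k | ∃ f : Fin k → Fin n × Fin n, (∀ a, f a ∈ P.stdRep) ∧
    StrictMono (fun a => (f a).1) ∧ StrictMono (fun a => (f a).2) ∧
    ∀ a b : Fin k, (f a).1 < (f b).2}

/-- The nesting number: the largest `k` such that the standard representation
contains pairs `(i_1,j_1), …, (i_k,j_k)` with `i_1 < ⋯ < i_k < j_k < ⋯ < j_1`. -/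
noncomputable def nest (P : LinkedPartition n) : ℕ :=
  sSup {k | ∃ f : Fin k → Fin n × Fin n, (∀ a, f a ∈ P.stdRep) ∧
    StrictMono (fun a => (f a).1) ∧ StrictAnti (fun a => (f a).2) ∧
    ∀ a b : Fin k, (f a).1 < (f b).2}

/-- The set of left components of the pairs of the standard representation. -/
def compl (P : LinkedPartition n) : Set (Fin n) := {i | ∃ j, (i, j) ∈ P.stdRep}

/-- The set of right components of the pairs of the standard representation. -/
def compr (P : LinkedPartition n) : Set (Fin n) := {j | ∃ i, (i, j) ∈ P.stdRep}

end LinkedPartition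

/-!
A linked partition is determined by the word whose letter at position `j` is the minimum `i < j` of
the block containing `j` as a non-minimal element, if there is one; crossings and nestings are then
strictly increasing and strictly decreasing subsequences of letters `< p` at positions `≥ p`. For
every `p`, read these letters from right to left and insert them by Hecke insertion; let `σ p` be
the shape of the resulting increasing tableau. The first row of `σ p` is the longest strictly
decreasing subsequence and its first column the longest strictly increasing one.

Passing from `σ (p + 1)` to `σ p` drops the letter `p`, which removes a rook strip, and inserts the
letter at position `p`, which adds at most one cell. The local rules of Hecke insertion are
invertible, so the word can be recovered from the shapes and the terminating cells of all
insertions, and every such history comes from a word. Conjugating all shapes and cells is therefore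
an involution on words, which exchanges crossings and nestings. It keeps the components, because `p`
is a left component iff dropping the letter `p` changes the shape, and a right component iff there
is an insertion at `p`.
-/

namespace HeckeInsertion

/-- A partition shape, encoded by its row lengths (rows are numbered from `0`, at the top). -/
abbrev Shape := ℕ → ℕ

/-- The skew shape `ν / μ` is a rook strip: no two of its cells share a row or a column. -/
def IsRookStrip (μ ν : Shape) : Prop :=
  ∀ i, (ν i = μ i ∨ ν i = μ i + 1) ∧ ν (i + 1) ≤ μ i

/-- The outcome of a Hecke insertion: the corner cell where it terminates, given by its row, and
whether that cell is new. A terminating cell that is not new is recorded, as in the definition of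
the recording tableau, at the bottom of its column. -/
structure Label where
  grows : Bool
  row : ℕ

/-- The label, if there is one, marks a corner of the shape. -/
def IsCorner : Option Label → Shape → Prop
  | none, _ => True
  | some l, σ => σ (l.row + 1) < σ l.row

/-- The shape after an insertion with outcome `l`. -/
def addCell : Option Label → Shape → Shape
  | none, σ => σ
  | some l, σ => fun i => if l.grows = true ∧ i = l.row then σ i + 1 else σ i

/-- The shape before an insertion with outcome `l`. -/
def removeCell : Option Label → Shape → Shape
  | none, σ => σ
  | some l, σ => fun i => if l.grows = true ∧ i = l.row then σ i - 1 else σ i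

/-- The outcome of inserting the largest letter into row `r`, when that letter occupies `ν / μ`. -/
def enterRow (μ ν : Shape) (r : ℕ) : Label := ⟨decide (ν r = μ r), r⟩

/-- The local rule of Hecke insertion. If the insertion restricted to smaller letters has outcome
`s` on the shape `μ`, and `ν / μ` holds the next letter, this is the outcome on `ν`; `hit` says
that this next letter is the one being inserted. -/
def pushLabel (hit : Prop) [Decidable hit] (μ ν : Shape) : Option Label → Option Label
  | none => if hit then some (enterRow μ ν 0) else none
  | some s =>
    if ν s.row ≠ μ s.row then some (enterRow μ ν (s.row + 1))
    else if s.grows = false ∧ ν (s.row + 1) = ν s.row then some ⟨false, s.row + 1⟩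
    else some s

/-- The inverse local rule: it recovers the outcome on smaller letters from the outcome `l` and the
two shapes `μ'` and `ρ` after the insertion. -/
def pullLabel (μ' ρ : Shape) : Option Label → Option Label
  | none => none
  | some l =>
    if ρ l.row = μ' l.row then some l
    else match l.row with
      | 0 => none
      | r + 1 => if l.grows = false ∧ ρ (r + 1) = ρ r then some ⟨false, r⟩
          else some (enterRow μ' ρ r)

theorem addCell_removeCell {l : Option Label} {σ : Shape} (h : IsCorner l σ) :
    addCell l (removeCell l σ) = σ := by
  rcases l with _ | l
  · rfl
  · funext i
    simp only [addCell, removeCell, IsCorner] at h ⊢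
    grind

theorem removeCell_addCell (l : Option Label) (σ : Shape) :
    removeCell l (addCell l σ) = σ := by
  rcases l with _ | l
  · rfl
  · funext i
    simp only [addCell, removeCell]
    grind

/-! ### Hecke insertion -/

section LocalRule

variable {hit : Prop} [Decidable hit] {μ ν : Shape} {s : Option Label}

theorem isCorner_pushLabel (hR : IsRookStrip μ ν) (hs : IsCorner s (addCell s μ)) :
    IsCorner (pushLabel hit μ ν s) (addCell (pushLabel hit μ ν s) ν) := by
  rcases s with _ | ⟨g, r⟩
  · have := hR 0; have := hR 1
    simp only [pushLabel, enterRow]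
    split_ifs <;> simp only [IsCorner, addCell]
    grind
  · have := hR r; have := hR (r + 1); have := hR (r + 2)
    simp only [IsCorner, addCell, pushLabel, enterRow] at hs ⊢
    split_ifs <;> simp only <;> grind

theorem isRookStrip_pushLabel (hR : IsRookStrip μ ν) (hμ : Antitone (addCell s μ))
    (hs : IsCorner s (addCell s μ)) :
    IsRookStrip (addCell s μ) (addCell (pushLabel hit μ ν s) ν) := by
  intro i
  have := hR i; have := hR (i + 1); have hμi := hμ i.le_succ
  rcases s with _ | ⟨g, r⟩
  · simp only [pushLabel, enterRow, addCell]
    split_ifs <;> simp only <;> grind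
  · have := hR r; have := hR (r + 1)
    simp only [IsCorner, addCell, pushLabel] at hs hμi ⊢
    split_ifs <;> simp only [enterRow] <;> grind

theorem pullLabel_pushLabel (hR : IsRookStrip μ ν) (hs : IsCorner s (addCell s μ)) :
    pullLabel (addCell s μ) (addCell (pushLabel hit μ ν s) ν) (pushLabel hit μ ν s) = s := by
  rcases s with _ | ⟨g, r⟩
  · have := hR 0
    simp only [pushLabel, enterRow]
    split_ifs <;> simp only [pullLabel, addCell]
    grind
  · have := hR r; have := hR (r + 1)
    simp only [IsCorner, addCell, pushLabel, enterRow] at hs ⊢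
    split_ifs <;> simp only [pullLabel, enterRow] <;> grind

variable {μ' ρ : Shape} {l : Option Label}

theorem isCorner_pullLabel (hR : IsRookStrip μ' ρ) (hl : IsCorner l ρ) :
    IsCorner (pullLabel μ' ρ l) μ' := by
  rcases l with _ | ⟨g, _ | r⟩
  · simp [IsCorner, pullLabel]
  · have := hR 0; have := hR 1
    grind [IsCorner, pullLabel, enterRow]
  · have := hR r; have := hR (r + 1); have := hR (r + 2)
    grind [IsCorner, pullLabel, enterRow]

theorem isRookStrip_pullLabel (hR : IsRookStrip μ' ρ) (hl : IsCorner l ρ) :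
    IsRookStrip (removeCell (pullLabel μ' ρ l) μ') (removeCell l ρ) := by
  intro i
  have := hR i; have := hR (i + 1)
  rcases l with _ | ⟨g, _ | r⟩
  · simpa [removeCell, pullLabel] using hR i
  · simp only [IsCorner, pullLabel] at hl ⊢
    split_ifs <;> simp only [removeCell] <;> grind
  · have := hR r; have := hR (r + 1); have := hR (r + 2)
    simp only [IsCorner, pullLabel, enterRow] at hl ⊢
    split_ifs <;> simp only [removeCell] <;> grind

theorem pushLabel_pullLabel (hR : IsRookStrip μ' ρ) (hl : IsCorner l ρ)
    (hhit : pullLabel μ' ρ l = none → (hit ↔ l ≠ none)) :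
    pushLabel hit (removeCell (pullLabel μ' ρ l) μ') (removeCell l ρ) (pullLabel μ' ρ l) = l := by
  rcases l with _ | ⟨g, _ | r⟩
  · grind [pushLabel, pullLabel]
  · have := hR 0; have := hR 1
    simp only [IsCorner, pullLabel] at hl hhit ⊢
    cases g <;> split_ifs <;>
      simp only [pushLabel, enterRow, removeCell, Option.ite_none_right_eq_some, Option.some.injEq,
        Label.mk.injEq, decide_eq_true_eq, decide_eq_false_iff_not] <;>
      grind
  · have := hR r; have := hR (r + 2); have hr := hR (r + 1)
    have hr' : ρ (r + 1) = μ' (r + 1) ∨ ρ (r + 1) - 1 = μ' (r + 1) := by omega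
    simp only [IsCorner, pullLabel, enterRow] at hl ⊢
    cases g <;> split_ifs <;>
      simp only [pushLabel, enterRow, removeCell, decide_eq_true_eq, decide_eq_false_iff_not] <;>
      grind

end LocalRule

/-- The shape of a tableau. A tableau with letters `< q` is encoded as the list of its `q` shapes
`σ_q, …, σ_1`, where `σ_k` is the shape of its part with letters `< k`. -/
def top : List Shape → Shape
  | [] => 0
  | ν :: _ => ν

/-- An increasing tableau: consecutive shapes differ by a rook strip. -/
def IsTableau : List Shape → Prop
  | [] => True
  | ν :: L => IsRookStrip (top L) ν ∧ IsTableau L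

/-- A partition shape: weakly decreasing row lengths, all but finitely many of them zero. -/
def IsShape (σ : Shape) : Prop := Antitone σ ∧ ∃ r, σ r = 0

/-- The outcome of the Hecke insertion of the letter `x` (nothing, if `x` is `none` or not among the
letters of the tableau). -/
def outcome (x : Option ℕ) : List Shape → Option Label
  | [] => none
  | ν :: L => pushLabel (x = some L.length) (top L) ν (outcome x L)

/-- The tableau after the Hecke insertion of the letter `x`. -/
def insert (x : Option ℕ) : List Shape → List Shape
  | [] => []
  | ν :: L => addCell (outcome x (ν :: L)) ν :: insert x L

/-- The tableau before a Hecke insertion with outcome `l`. -/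
def uninsert : List Shape → Option Label → List Shape
  | [], _ => []
  | ρ :: L, l => removeCell l ρ :: uninsert L (pullLabel (top L) ρ l)

/-- The letter whose Hecke insertion had outcome `l`. -/
def ejected : List Shape → Option Label → Option ℕ
  | [], _ => none
  | ρ :: L, l => if l ≠ none ∧ pullLabel (top L) ρ l = none then some L.length
      else ejected L (pullLabel (top L) ρ l)

section Insertion

variable {x : Option ℕ} {l : Option Label} {L : List Shape}

theorem IsRookStrip.antitone {μ ν : Shape} (h : IsRookStrip μ ν) : Antitone ν :=
  antitone_nat_of_succ_le fun i => by grind [h i]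

theorem IsTableau.isShape_top : ∀ {L : List Shape}, IsTableau L → IsShape (top L)
  | [], _ => ⟨antitone_const, 0, rfl⟩
  | _ :: _, ⟨hR, hL⟩ =>
    have ⟨r, hr⟩ := hL.isShape_top.2
    ⟨hR.antitone, r + 1, Nat.le_zero.1 (hr ▸ (hR r).2)⟩

theorem eq_replicate_of_top_eq_zero : ∀ {L : List Shape}, IsTableau L → top L = 0 →
    L = List.replicate L.length 0
  | [], _, _ => rfl
  | ν :: L, ⟨hR, hL⟩, h => by
    have h0 : top L = 0 := funext fun i => by
      have hν : ν i = 0 := congrFun h i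
      simpa using show top L i = 0 by grind [hR i]
    have hν : ν = 0 := h
    rw [hν, List.length_cons, List.replicate_succ, ← eq_replicate_of_top_eq_zero hL h0]

@[simp]
theorem length_insert (x : Option ℕ) (L : List Shape) : (insert x L).length = L.length := by
  induction L with
  | nil => rfl
  | cons ν L ih => simp [insert, ih]

@[simp]
theorem length_uninsert (L : List Shape) (l : Option Label) : (uninsert L l).length = L.length := by
  induction L generalizing l with
  | nil => rfl
  | cons ρ L ih => simp [uninsert, ih]

theorem outcome_eq_none_iff : outcome x L = none ↔ ∀ y ∈ x, L.length ≤ y := by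
  induction L with
  | nil => simp [outcome]
  | cons ν L ih =>
    rcases ho : outcome x L with _ | s
    · have hx := ih.1 ho
      rcases x with _ | y
      · simp [outcome, ho, pushLabel]
      · have := hx y rfl
        simp only [outcome, ho, pushLabel, List.length_cons, Option.mem_some_iff]
        grind
    · obtain ⟨y, hy, hlt⟩ : ∃ y ∈ x, y < L.length := by simpa [ho] using ih
      have : pushLabel (x = some L.length) (top L) ν (some s) ≠ none := by
        simp only [pushLabel]; split_ifs <;> simp
      simp only [outcome, ho, this, List.length_cons, false_iff, not_forall]
      exact ⟨y, hy, by omega⟩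

theorem insert_of_outcome_eq_none (h : outcome x L = none) : insert x L = L := by
  induction L with
  | nil => rfl
  | cons ν L ih =>
    have hL : outcome x L = none := by
      rw [outcome_eq_none_iff] at h ⊢
      exact fun y hy => (Nat.le_succ _).trans (h y hy)
    rw [insert, h, ih hL, addCell]

theorem top_insert : top (insert x L) = addCell (outcome x L) (top L) := by
  cases L <;> rfl

theorem IsTableau.isCorner_outcome : ∀ {L : List Shape}, IsTableau L →
    IsCorner (outcome x L) (top (insert x L))
  | [], _ => trivial
  | _ :: _, ⟨hR, hL⟩ => isCorner_pushLabel hR (top_insert (x := x) ▸ hL.isCorner_outcome)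

theorem IsTableau.insert : ∀ {L : List Shape}, IsTableau L →
    IsTableau (HeckeInsertion.insert x L)
  | [], _ => trivial
  | _ :: L, ⟨hR, hL⟩ => by
    have hμ : Antitone (top (HeckeInsertion.insert x L)) := hL.insert.isShape_top.1
    have hs := hL.isCorner_outcome (x := x)
    rw [top_insert] at hμ hs
    exact ⟨top_insert (L := L) ▸ isRookStrip_pushLabel hR hμ hs, hL.insert⟩

theorem uninsert_insert : ∀ {L : List Shape}, IsTableau L →
    uninsert (HeckeInsertion.insert x L) (outcome x L) = L
  | [], _ => rfl
  | _ :: _, ⟨hR, hL⟩ => by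
    have hs := hL.isCorner_outcome (x := x)
    rw [top_insert] at hs
    rw [HeckeInsertion.insert, uninsert, removeCell_addCell, top_insert, outcome,
      pullLabel_pushLabel hR hs, uninsert_insert hL]

theorem ejected_none : ejected L none = none := by
  induction L with
  | nil => rfl
  | cons ρ L ih => simpa [ejected, pullLabel] using ih

theorem uninsert_none : uninsert L none = L := by
  induction L with
  | nil => rfl
  | cons ρ L ih => simpa [uninsert, pullLabel, removeCell] using ih

theorem ejected_lt_length {y : ℕ} (h : y ∈ ejected L l) : y < L.length := by
  induction L generalizing l with
  | nil => simp [ejected] at h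
  | cons ρ L ih =>
    rw [ejected] at h
    split_ifs at h with h0
    · simp_all
    · exact (ih h).trans (Nat.lt_succ_self _)

theorem ejected_insert : ∀ {L : List Shape}, IsTableau L → (∀ y ∈ x, y < L.length) →
    ejected (HeckeInsertion.insert x L) (outcome x L) = x
  | [], _, hx => by rcases x with _ | y <;> simp_all [ejected, HeckeInsertion.insert]
  | ν :: L, ⟨hR, hL⟩, hx => by
    have hs := hL.isCorner_outcome (x := x)
    rw [top_insert] at hs
    rw [HeckeInsertion.insert, ejected, top_insert, outcome, pullLabel_pushLabel hR hs]
    by_cases h : outcome x L = none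
    · rw [h, ejected_none]
      have hlen := outcome_eq_none_iff.1 h
      rcases x with _ | y
      · simp [pushLabel]
      · have : y = L.length := le_antisymm (Nat.lt_succ_iff.1 (hx y rfl)) (hlen y rfl)
        simp [pushLabel, this]
    · rw [if_neg fun hn => h hn.2]
      refine ejected_insert hL fun y hy => ?_
      rw [outcome_eq_none_iff] at h
      rcases x with _ | z <;> simp_all

theorem top_uninsert (hl : IsCorner l (top L)) : top (uninsert L l) = removeCell l (top L) := by
  rcases L with _ | ⟨ρ, L⟩
  · rcases l with _ | l
    · rfl
    · exact absurd hl (lt_irrefl 0)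
  · rfl

theorem IsTableau.uninsert : ∀ {L : List Shape} {l : Option Label}, IsTableau L →
    IsCorner l (top L) → IsTableau (uninsert L l)
  | [], _, _, _ => trivial
  | _ :: _, _, ⟨hR, hL⟩, hl =>
    have hs := isCorner_pullLabel hR hl
    ⟨top_uninsert hs ▸ isRookStrip_pullLabel hR hl, hL.uninsert hs⟩

theorem outcome_uninsert : ∀ {L : List Shape} {l : Option Label}, IsTableau L →
    IsCorner l (top L) → outcome (ejected L l) (HeckeInsertion.uninsert L l) = l
  | [], none, _, _ => rfl
  | [], some _, _, hl => absurd hl (lt_irrefl 0)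
  | ρ :: L, l, ⟨hR, hL⟩, hl => by
    have hs := isCorner_pullLabel hR hl
    have ih : outcome (ejected (ρ :: L) l)
        (HeckeInsertion.uninsert L (pullLabel (top L) ρ l)) = pullLabel (top L) ρ l := by
      rw [ejected]
      split_ifs with h
      · simp [h.2, outcome_eq_none_iff]
      · exact outcome_uninsert hL hs
    rw [HeckeInsertion.uninsert, outcome, ih, top_uninsert hs, length_uninsert]
    refine pushLabel_pullLabel hR hl fun h => ?_
    rw [ejected, h, ejected_none]
    simp

theorem insert_uninsert : ∀ {L : List Shape} {l : Option Label}, IsTableau L →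
    IsCorner l (top L) → HeckeInsertion.insert (ejected L l) (HeckeInsertion.uninsert L l) = L
  | [], _, _, _ => rfl
  | ρ :: L, l, ⟨hR, hL⟩, hl => by
    have ho := outcome_uninsert (L := ρ :: L) ⟨hR, hL⟩ hl
    have hs := isCorner_pullLabel hR hl
    have ih : HeckeInsertion.insert (ejected (ρ :: L) l)
        (HeckeInsertion.uninsert L (pullLabel (top L) ρ l)) = L := by
      rw [ejected]
      split_ifs with h
      · rw [h.2, uninsert_none]
        exact insert_of_outcome_eq_none (by simp [outcome_eq_none_iff])
      · exact insert_uninsert hL hs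
    rw [HeckeInsertion.uninsert] at ho ⊢
    have hρ : addCell l (removeCell l ρ) = ρ := addCell_removeCell hl
    rw [HeckeInsertion.insert, ho, ih, hρ]

end Insertion

/-! ### Histories of words -/

section History

/-- The insertion tableau of the part of the word `w` with letters `< q`, read from right to
left. -/
def tableau (q : ℕ) (w : List (Option ℕ)) : List Shape := w.foldr insert (List.replicate q 0)

/-- The words read at position `t` and after: the letter at position `j` is smaller than `j`. -/
def IsAdmissible : ℕ → List (Option ℕ) → Prop
  | _, [] => True
  | t, o :: w => (∀ y ∈ o, y < t) ∧ IsAdmissible (t + 1) w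

/-- The history of the word `w`, starting at position `t`: for every position `p`, the shape of the
letters `< p` at and after position `p`, and the outcome of the insertion of the letter at `p`. -/
def history : ℕ → List (Option ℕ) → List (Shape × Option Label)
  | _, [] => []
  | t, o :: w => (top (tableau t (o :: w)), outcome o (tableau t w)) :: history (t + 1) w

/-- The first shape of a history. -/
def headShape : List (Shape × Option Label) → Shape
  | [] => 0
  | (σ, _) :: _ => σ

/-- The lists of shapes and outcomes that are the history of a word. -/
def IsHistory : List (Shape × Option Label) → Prop
  | [] => True
  | (σ, l) :: h =>
    IsShape σ ∧ IsCorner l σ ∧ IsRookStrip (removeCell l σ) (headShape h) ∧ IsHistory h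

/-- The word with a given history, if `L` is its insertion tableau at the first position. -/
def decode : List Shape → List (Shape × Option Label) → List (Option ℕ)
  | _, [] => []
  | L, (_, l) :: h => ejected L l :: decode (headShape h :: uninsert L l) h

variable (q t : ℕ) (o : Option ℕ) (w : List (Option ℕ))

@[simp]
theorem tableau_cons : tableau q (o :: w) = insert o (tableau q w) := rfl

@[simp]
theorem length_tableau : (tableau q w).length = q := by
  induction w with
  | nil => simp [tableau]
  | cons o w ih => simp [ih]

theorem isTableau_replicate : IsTableau (List.replicate q 0) := by
  induction q with
  | zero => trivial
  | succ q ih =>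
    refine ⟨?_, ih⟩
    cases q <;> simp [IsRookStrip, top, List.replicate_succ]

theorem isTableau_tableau : IsTableau (tableau q w) := by
  induction w with
  | nil => exact isTableau_replicate q
  | cons o w ih => exact ih.insert

theorem tableau_succ : tableau (q + 1) w = top (tableau (q + 1) w) :: tableau q w := by
  induction w with
  | nil => rfl
  | cons o w ih =>
    rw [tableau_cons, ih]
    rfl

theorem headShape_history : headShape (history t w) = top (tableau t w) := by
  cases w with
  | nil => cases t <;> rfl
  | cons o w => rfl

theorem isHistory_history : IsHistory (history t w) := by
  induction w generalizing t with
  | nil => trivial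
  | cons o w ih =>
    have hL := isTableau_tableau t w
    have hsucc := isTableau_tableau (t + 1) w
    rw [tableau_succ] at hsucc
    refine ⟨hL.insert.isShape_top, hL.isCorner_outcome, ?_, ih (t + 1)⟩
    rw [headShape_history, tableau_cons, top_insert, removeCell_addCell]
    exact hsucc.1

theorem decode_history (hw : IsAdmissible t w) : decode (tableau t w) (history t w) = w := by
  induction w generalizing t with
  | nil => rfl
  | cons o w ih =>
    have hL := isTableau_tableau t w
    rw [history, decode, tableau_cons, ejected_insert hL (by simpa using hw.1),
      uninsert_insert hL, headShape_history, ← tableau_succ, ih _ hw.2]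

variable {L : List Shape} {h : List (Shape × Option Label)}

theorem isAdmissible_decode : IsAdmissible L.length (decode L h) := by
  induction h generalizing L with
  | nil => trivial
  | cons e h ih =>
    exact ⟨fun y hy => ejected_lt_length hy, by simpa [decode] using ih (L := _ :: uninsert L e.2)⟩

theorem length_decode : (decode L h).length = h.length := by
  induction h generalizing L with
  | nil => rfl
  | cons e h ih => simp [decode, ih]

theorem length_history : (history t w).length = w.length := by
  induction w generalizing t with
  | nil => rfl
  | cons o w ih => simp [history, ih]

theorem tableau_decode_and_history_decode (hL : IsTableau L) (htop : top L = headShape h)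
    (hh : IsHistory h) :
    tableau L.length (decode L h) = L ∧ history L.length (decode L h) = h := by
  induction h generalizing L with
  | nil => exact ⟨(eq_replicate_of_top_eq_zero hL htop).symm, rfl⟩
  | cons e h ih =>
    obtain ⟨σ, l⟩ := e
    obtain ⟨-, hl, hR, hh⟩ := hh
    obtain rfl : top L = σ := htop
    have hU : IsTableau (headShape h :: uninsert L l) :=
      ⟨(top_uninsert hl).symm ▸ hR, hL.uninsert hl⟩
    obtain ⟨ht, hhist⟩ := ih hU rfl hh
    rw [List.length_cons, length_uninsert] at ht hhist
    have ht' : tableau L.length (decode (headShape h :: uninsert L l) h) = uninsert L l := by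
      rw [tableau_succ] at ht
      exact (List.cons.inj ht).2
    simp only [decode, history, tableau_cons, ht', insert_uninsert hL hl, outcome_uninsert hL hl,
      hhist, and_self]

end History

/-! ### Conjugation -/

section Conjugation

/-- The conjugate of a partition shape. -/
noncomputable def conj (σ : Shape) : Shape := fun j => sInf {i | σ i ≤ j}

/-- The outcome with the same cell of `σ`, after conjugation of `σ`. A cell that is not new is now
recorded at the end of its row, which makes no difference for a corner. -/
def conjLabel (σ : Shape) : Option Label → Option Label :=
  Option.map fun l => ⟨l.grows, σ l.row - 1⟩

/-- The history with all shapes and all cells conjugated. -/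
noncomputable def conjHistory : List (Shape × Option Label) → List (Shape × Option Label) :=
  List.map fun e => (conj e.1, conjLabel e.1 e.2)

variable {μ ν σ : Shape} {l : Option Label} {h : List (Shape × Option Label)}

theorem lt_conj_iff (hσ : IsShape σ) {i j : ℕ} : i < conj σ j ↔ j < σ i := by
  obtain ⟨hanti, r, hr⟩ := hσ
  have hne : {i | σ i ≤ j}.Nonempty := ⟨r, by simp [hr]⟩
  constructor
  · intro hi
    simpa using Nat.notMem_of_lt_sInf hi
  · intro hj
    by_contra! hle
    exact (hj.trans_le (hanti hle)).not_ge (Nat.sInf_mem hne)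

theorem IsShape.conj (hσ : IsShape σ) : IsShape (conj σ) := by
  refine ⟨fun i j hij => ?_, σ 0, ?_⟩
  · exact le_of_forall_lt fun k hk => by
      rw [lt_conj_iff hσ] at hk ⊢
      omega
  · exact Nat.eq_zero_of_not_pos fun hpos => lt_irrefl _ ((lt_conj_iff hσ).1 hpos)

theorem conj_conj (hσ : IsShape σ) : HeckeInsertion.conj (HeckeInsertion.conj σ) = σ :=
  funext fun i => eq_of_forall_lt_iff fun j => by rw [lt_conj_iff hσ.conj, lt_conj_iff hσ]

theorem conj_zero : conj 0 = 0 := by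
  funext j
  simp [conj]

theorem IsRookStrip.conj (hR : IsRookStrip μ ν) (hμ : IsShape μ) (hν : IsShape ν) :
    IsRookStrip (conj μ) (conj ν) := by
  intro j
  have hle : HeckeInsertion.conj μ j ≤ HeckeInsertion.conj ν j := le_of_forall_lt fun i hi => by
    rw [lt_conj_iff hμ] at hi
    rw [lt_conj_iff hν]
    grind [hR i]
  have hrow : HeckeInsertion.conj ν j ≤ HeckeInsertion.conj μ j + 1 := by
    by_contra! hlt
    rw [lt_conj_iff hν] at hlt
    exact lt_irrefl _ ((lt_conj_iff hμ).2 (hlt.trans_le (hR _).2))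
  refine ⟨by omega, le_of_forall_lt fun i hi => ?_⟩
  rw [lt_conj_iff hν] at hi
  rw [lt_conj_iff hμ]
  grind [hR i]

theorem conj_eq_succ_row {k : Label} (hσ : IsShape σ) (hk : IsCorner (some k) σ) :
    conj σ (σ k.row - 1) = k.row + 1 := by
  have hk : σ (k.row + 1) < σ k.row := hk
  refine le_antisymm ?_ ?_
  · rw [← not_lt, lt_conj_iff hσ]
    omega
  · rw [Nat.succ_le_iff, lt_conj_iff hσ]
    omega

theorem isCorner_conjLabel (hσ : IsShape σ) (hl : IsCorner l σ) :
    IsCorner (conjLabel σ l) (conj σ) := by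
  rcases l with _ | k
  · trivial
  · have hrow := conj_eq_succ_row hσ hl
    have hl : σ (k.row + 1) < σ k.row := hl
    change conj σ (σ k.row - 1 + 1) < conj σ (σ k.row - 1)
    rw [hrow, Nat.lt_succ_iff, ← not_lt, lt_conj_iff hσ]
    omega

theorem conjLabel_conjLabel (hσ : IsShape σ) (hl : IsCorner l σ) :
    conjLabel (conj σ) (conjLabel σ l) = l := by
  rcases l with _ | k
  · rfl
  · simp [conjLabel, conj_eq_succ_row hσ hl]

theorem IsShape.removeCell (hσ : IsShape σ) (hl : IsCorner l σ) : IsShape (removeCell l σ) := by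
  rcases l with _ | k
  · exact hσ
  · obtain ⟨hanti, r, hr⟩ := hσ
    have hl : σ (k.row + 1) < σ k.row := hl
    refine ⟨antitone_nat_of_succ_le fun i => ?_, r, by simp [HeckeInsertion.removeCell, hr]⟩
    have := hanti i.le_succ
    simp only [HeckeInsertion.removeCell]
    grind

theorem conj_removeCell (hσ : IsShape σ) (hl : IsCorner l σ) :
    conj (removeCell l σ) = removeCell (conjLabel σ l) (conj σ) := by
  have hσ' := hσ.removeCell hl
  rcases l with _ | ⟨g, r⟩
  · rfl
  · funext j
    have hrow := conj_eq_succ_row hσ hl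
    have hl : σ (r + 1) < σ r := hl
    refine eq_of_forall_lt_iff fun i => ?_
    rw [lt_conj_iff hσ']
    have hi := lt_conj_iff hσ (i := i) (j := j)
    simp only [removeCell, conjLabel, Option.map_some] at hrow ⊢
    grind

theorem headShape_conjHistory : headShape (conjHistory h) = conj (headShape h) := by
  cases h with
  | nil => exact conj_zero.symm
  | cons e h => rfl

theorem IsHistory.isShape_headShape (hh : IsHistory h) : IsShape (headShape h) := by
  cases h with
  | nil => exact ⟨antitone_const, 0, rfl⟩
  | cons e h => exact hh.1

theorem IsHistory.conjHistory (hh : IsHistory h) : IsHistory (conjHistory h) := by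
  induction h with
  | nil => trivial
  | cons e h ih =>
    obtain ⟨hσ, hl, hR, hh⟩ := hh
    refine ⟨hσ.conj, isCorner_conjLabel hσ hl, ?_, ih hh⟩
    have := hR.conj (hσ.removeCell hl) hh.isShape_headShape
    rwa [conj_removeCell hσ hl, ← headShape_conjHistory] at this

theorem conjHistory_conjHistory (hh : IsHistory h) :
    HeckeInsertion.conjHistory (HeckeInsertion.conjHistory h) = h := by
  induction h with
  | nil => rfl
  | cons e h ih =>
    obtain ⟨hσ, hl, -, hh⟩ := hh
    exact congrArg₂ List.cons (Prod.ext (conj_conj hσ) (conjLabel_conjLabel hσ hl)) (ih hh)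

/-- The word whose history is conjugate to that of `w`. -/
noncomputable def conjWord (w : List (Option ℕ)) : List (Option ℕ) :=
  decode [] (conjHistory (history 0 w))

variable {w : List (Option ℕ)}

theorem isAdmissible_conjWord : IsAdmissible 0 (conjWord w) := isAdmissible_decode (L := [])

theorem length_conjWord : (conjWord w).length = w.length := by
  rw [conjWord, length_decode, conjHistory, List.length_map, length_history]

theorem history_conjWord : history 0 (conjWord w) = conjHistory (history 0 w) := by
  refine (tableau_decode_and_history_decode (L := []) trivial ?_
    (isHistory_history 0 w).conjHistory).2
  rw [headShape_conjHistory, headShape_history,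
    List.eq_nil_of_length_eq_zero (length_tableau 0 w)]
  exact conj_zero.symm

theorem conjWord_conjWord (hw : IsAdmissible 0 w) : conjWord (conjWord w) = w := by
  have htab : tableau 0 w = [] := List.eq_nil_of_length_eq_zero (length_tableau 0 w)
  rw [conjWord, history_conjWord, conjHistory_conjHistory (isHistory_history 0 w), ← htab,
    decode_history 0 w hw]

end Conjugation

section Invariance

theorem addCell_pushLabel_eq_iff {hit : Prop} [Decidable hit] {μ ν : Shape} {s : Option Label} :
    addCell (pushLabel hit μ ν s) ν = addCell s μ ↔ ν = μ ∧ ¬(hit ∧ s = none) := by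
  constructor
  · intro h
    have hrow := fun i => congrFun h i
    rcases s with _ | ⟨g, r⟩
    · have h0 := hrow 0
      by_cases hh : hit
      · exfalso
        simp only [pushLabel, if_pos hh, enterRow, addCell] at h0
        grind
      · simpa [pushLabel, hh, addCell] using h
    · refine ⟨funext fun i => ?_, by simp⟩
      have hi := hrow i
      have hr := hrow r
      have hr' := hrow (r + 1)
      simp only [pushLabel, enterRow] at hi hr hr'
      split_ifs at hi hr hr' <;> simp only [addCell] at hi hr hr' <;> grind
  · rintro ⟨rfl, hhit⟩
    rcases s with _ | ⟨g, r⟩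
    · have : ¬hit := by simpa using hhit
      simp [pushLabel, this]
    · simp only [pushLabel]
      split_ifs <;> simp_all [addCell]

theorem top_tableau_succ_ne_iff (v : ℕ) (w : List (Option ℕ)) :
    top (tableau (v + 1) w) ≠ top (tableau v w) ↔ some v ∈ w := by
  induction w with
  | nil => cases v <;> simp [tableau, top, List.replicate_succ]
  | cons o w ih =>
    have hnone : o = some v → outcome o (tableau v w) = none := by
      rintro rfl
      simp [outcome_eq_none_iff]
    rw [tableau_cons, tableau_cons, top_insert, top_insert]
    nth_rw 1 [tableau_succ]
    rw [outcome, length_tableau, ne_eq, addCell_pushLabel_eq_iff, not_and_or, not_not, ← ne_eq, ih,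
      and_iff_left_of_imp hnone, List.mem_cons, or_comm, eq_comm]

theorem history_drop (t p : ℕ) (w : List (Option ℕ)) :
    (history t w).drop p = history (t + p) (w.drop p) := by
  induction p generalizing t w with
  | zero => rfl
  | succ p ih =>
    cases w with
    | nil => rfl
    | cons o w => simpa [history, add_assoc, add_comm 1] using ih (t + 1) w

variable (p : ℕ) (w : List (Option ℕ))

theorem history_drop_conjWord :
    history p ((conjWord w).drop p) = conjHistory (history p (w.drop p)) := by
  have := congrArg (List.drop p) (history_conjWord (w := w))
  rwa [conjHistory, ← List.map_drop, history_drop, history_drop, zero_add] at this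

theorem top_tableau_drop_conjWord :
    top (tableau p ((conjWord w).drop p)) = conj (top (tableau p (w.drop p))) := by
  rw [← headShape_history, history_drop_conjWord, headShape_conjHistory, headShape_history]

theorem isShape_tableau : IsShape (top (tableau p w)) := (isTableau_tableau p w).isShape_top

theorem outcome_conjWord {o o' : Option ℕ} {u u' : List (Option ℕ)} (hu : w.drop p = o :: u)
    (hu' : (conjWord w).drop p = o' :: u') :
    outcome o' (tableau p u') = conjLabel (top (tableau p (o :: u))) (outcome o (tableau p u)) := by
  have h := history_drop_conjWord p w
  rw [hu, hu'] at h
  exact congrArg Prod.snd (List.cons.inj h).1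

theorem exists_drop_eq_cons_drop_succ {α : Type*} {w : List α} {p : ℕ} (hp : p < w.length) :
    ∃ o, w[p]? = some o ∧ w.drop p = o :: w.drop (p + 1) :=
  ⟨w[p], List.getElem?_eq_getElem hp, List.drop_eq_getElem_cons hp⟩

theorem top_tableau_drop_succ_conjWord :
    top (tableau p ((conjWord w).drop (p + 1))) = conj (top (tableau p (w.drop (p + 1)))) := by
  rcases lt_or_ge p w.length with hp | hp
  · obtain ⟨o, -, hu⟩ := exists_drop_eq_cons_drop_succ hp
    obtain ⟨o', -, hu'⟩ := exists_drop_eq_cons_drop_succ (length_conjWord (w := w) ▸ hp)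
    have htop := top_tableau_drop_conjWord p w
    have hcorner := (isTableau_tableau p (w.drop (p + 1))).isCorner_outcome (x := o)
    rw [hu, hu', tableau_cons, top_insert] at htop
    rw [← removeCell_addCell (outcome o' _) (top _), htop, outcome_conjWord p w hu hu',
      ← conj_removeCell (isShape_tableau p _) hcorner, tableau_cons, top_insert, removeCell_addCell]
  · have hp' := (length_conjWord (w := w)).trans_le hp
    have h := top_tableau_drop_conjWord p w
    rw [List.drop_eq_nil_of_le hp, List.drop_eq_nil_of_le hp'] at h
    rwa [List.drop_eq_nil_of_le (hp.trans p.le_succ), List.drop_eq_nil_of_le (hp'.trans p.le_succ)]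

theorem isAdmissible_iff {t : ℕ} {w : List (Option ℕ)} :
    IsAdmissible t w ↔ ∀ j y, w[j]? = some (some y) → y < t + j := by
  induction w generalizing t with
  | nil => simp [IsAdmissible]
  | cons o w ih =>
    rw [IsAdmissible, ih,
      ← Nat.and_forall_add_one (p := fun j => ∀ y, (o :: w)[j]? = some (some y) → y < t + j)]
    simp [add_assoc, add_comm 1]

variable {p w} (hw : IsAdmissible 0 w)
include hw

theorem some_mem_drop_succ_iff : some p ∈ w.drop (p + 1) ↔ some p ∈ w := by
  refine ⟨List.mem_of_mem_drop, fun h => ?_⟩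
  obtain ⟨j, hj⟩ := List.mem_iff_getElem?.1 h
  have hlt := isAdmissible_iff.1 hw j p hj
  refine List.mem_iff_getElem?.2 ⟨j - (p + 1), ?_⟩
  rw [List.getElem?_drop, ← hj]
  congr 1
  omega

theorem some_mem_conjWord_iff : some p ∈ conjWord w ↔ some p ∈ w := by
  rw [← some_mem_drop_succ_iff hw, ← some_mem_drop_succ_iff isAdmissible_conjWord,
    ← top_tableau_succ_ne_iff, ← top_tableau_succ_ne_iff, top_tableau_drop_conjWord,
    top_tableau_drop_succ_conjWord, ne_eq, ne_eq, not_iff_not]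
  refine ⟨fun h => ?_, fun h => by rw [h]⟩
  rw [← conj_conj (isShape_tableau (p + 1) _), h, conj_conj (isShape_tableau p _)]

theorem outcome_tableau_eq_none_iff {o : Option ℕ} {u : List (Option ℕ)} (hp : w[p]? = some o) :
    outcome o (tableau p u) = none ↔ o = none := by
  rw [outcome_eq_none_iff, length_tableau]
  rcases o with _ | y
  · simp
  · simpa using isAdmissible_iff.1 hw p y hp

theorem getElem?_conjWord_eq_some_none_iff : (conjWord w)[p]? = some none ↔ w[p]? = some none := by
  rcases lt_or_ge p w.length with hp | hp
  · obtain ⟨o, ho, hu⟩ := exists_drop_eq_cons_drop_succ hp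
    obtain ⟨o', ho', hu'⟩ := exists_drop_eq_cons_drop_succ (length_conjWord (w := w) ▸ hp)
    rw [ho, ho', Option.some_inj, Option.some_inj, ← outcome_tableau_eq_none_iff hw ho,
      ← outcome_tableau_eq_none_iff isAdmissible_conjWord ho', outcome_conjWord p w hu hu']
    exact Option.map_eq_none_iff
  · rw [List.getElem?_eq_none hp, List.getElem?_eq_none (length_conjWord.trans_le hp)]

end Invariance

/-! ### Longest chains in words -/

section FirstRow

/-- If `G q` is the length of the longest increasing chain of letters `< q` read so far, then
`step o G q` is that length after the letter `o` is read. -/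
def step : Option ℕ → (ℕ → ℕ) → ℕ → ℕ
  | none, G => G
  | some x, G => fun q => if x < q then max (G q) (G x + 1) else G q

theorem addCell_pushLabel_zero {hit : Prop} [Decidable hit] {μ ν : Shape} {s : Option Label}
    (hR : IsRookStrip μ ν) :
    addCell (pushLabel hit μ ν s) ν 0 =
      max (ν 0) (addCell s μ 0 + if hit ∧ s = none then 1 else 0) := by
  have := hR 0
  rcases s with _ | ⟨g, r⟩
  · simp only [pushLabel, enterRow]
    split_ifs <;> simp only [addCell] <;> grind
  · simp only [pushLabel, enterRow]
    split_ifs <;> simp only [addCell] <;> grind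

theorem top_tableau_zero_le_succ (q : ℕ) (w : List (Option ℕ)) :
    top (tableau q w) 0 ≤ top (tableau (q + 1) w) 0 := by
  have h := isTableau_tableau (q + 1) w
  rw [tableau_succ] at h
  have := h.1 0
  omega

theorem top_tableau_cons_zero (q : ℕ) (o : Option ℕ) (w : List (Option ℕ)) :
    top (tableau q (o :: w)) 0 = step o (fun q => top (tableau q w) 0) q := by
  induction q with
  | zero =>
    have h0 : ∀ w, tableau 0 w = [] := fun w => List.eq_nil_of_length_eq_zero (length_tableau 0 w)
    rcases o with _ | x <;> simp [h0, step, top]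
  | succ q ih =>
    have h := isTableau_tableau (q + 1) w
    have hle := top_tableau_zero_le_succ q w
    rw [tableau_cons, top_insert] at ih ⊢
    nth_rw 1 [tableau_succ]
    rw [tableau_succ] at h
    have hnone := outcome_eq_none_iff (x := o) (L := tableau q w)
    rw [outcome, addCell_pushLabel_zero h.1, ih, length_tableau]
    rw [length_tableau] at hnone
    rcases o with _ | x
    · simpa [step]
    · simp only [hnone, step]
      grind

theorem top_tableau_zero (q : ℕ) (w : List (Option ℕ)) :
    top (tableau q w) 0 = w.foldr step 0 q := by
  induction w generalizing q with
  | nil => cases q <;> simp [tableau, top, List.replicate_succ]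
  | cons o w ih => rw [top_tableau_cons_zero, List.foldr_cons, funext ih]

end FirstRow

section Depth

open Classical in
/-- The recursion step for `depth`: `A` is the set of rows holding the new letter. -/
noncomputable def depthStep (c : ℕ) (A : ℕ → Prop) (d : ℕ → ℕ) (i : ℕ) : ℕ :=
  max c (max (d i) (({k ∈ Finset.range i | A k}).sup fun k => d k + 1))

/-- `depth G L i` is the largest value of `G v + m`, where the tableau `L` has `m` cells with
increasing letters `≥ v` in increasing rows `< i`. Here `G v` stands for the longest increasing
chain of letters `< v` that precede the letters of `L` in a word; for large `i`, moving a letter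
from this prefix into `L` by Hecke insertion does not change the depth. -/
noncomputable def depth (G : ℕ → ℕ) : List Shape → ℕ → ℕ
  | [], _ => G 0
  | ν :: L, i => depthStep (G (L.length + 1)) (fun k => ν k ≠ top L k) (depth G L) i

/-- The relation between the depths `d` of a tableau preceded by a letter and the depths `d'` after
the insertion of that letter: they differ only in rows `≤ r`, where `e` is the depth of the chains
through the bumping path. -/
def Carry (d d' : ℕ → ℕ) (r : ℕ) : Prop :=
  ∃ e : ℕ → ℕ, StrictMonoOn e (Set.Iic r) ∧ (∀ i ≤ r, d i = max (d' i) (e i)) ∧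
    (∀ i, r < i → d i = d' i) ∧ d r = d (r + 1)

variable {c i r M : ℕ} {A A' : ℕ → Prop} {d d' : ℕ → ℕ}

theorem depthStep_le_iff :
    depthStep c A d i ≤ M ↔ c ≤ M ∧ d i ≤ M ∧ ∀ k < i, A k → d k + 1 ≤ M := by
  simp [depthStep]

theorem le_depthStep (c : ℕ) (A : ℕ → Prop) (d : ℕ → ℕ) (i : ℕ) :
    c ≤ depthStep c A d i ∧ d i ≤ depthStep c A d i ∧
      ∀ k < i, A k → d k + 1 ≤ depthStep c A d i :=
  depthStep_le_iff.1 le_rfl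

theorem monotone_depthStep (hd : Monotone d) : Monotone (depthStep c A d) := by
  intro i j hij
  obtain ⟨hc, hj, hk⟩ := le_depthStep c A d j
  exact depthStep_le_iff.2 ⟨hc, (hd hij).trans hj, fun k hki => hk k (hki.trans_le hij)⟩

theorem depthStep_succ_le (hd : Monotone d) (hs : ∀ i, d (i + 1) ≤ d i + 1) (i : ℕ) :
    depthStep c A d (i + 1) ≤ depthStep c A d i + 1 := by
  obtain ⟨hc, hi, -⟩ := le_depthStep c A d i
  have := hs i
  refine depthStep_le_iff.2 ⟨by omega, by omega, fun k hk _ => ?_⟩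
  have := hd (Nat.lt_succ_iff.1 hk)
  omega

theorem depthStep_zero : depthStep c A d 0 = max c (d 0) := by simp [depthStep]

theorem depthStep_eq_max {e : ℕ → ℕ} (he : ∀ k < i, e k < e i)
    (hd : ∀ k ≤ i, d k = max (d' k) (e k)) (hA : ∀ k < i, A k ↔ A' k) :
    depthStep c A d i = max (depthStep c A' d' i) (e i) := by
  refine eq_of_forall_ge_iff fun M => ?_
  rw [max_le_iff, depthStep_le_iff, depthStep_le_iff, hd i le_rfl]
  grind

theorem Carry.stay (h : Carry d d' r) (hd' : Monotone d') (hr : ¬A r) :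
    Carry (depthStep c A d) (depthStep c A d') r := by
  obtain ⟨e, he, hle, hgt, hrr⟩ := h
  have hr1 : d (r + 1) = d' (r + 1) := hgt _ r.lt_succ_self
  refine ⟨e, he, fun i hi => depthStep_eq_max (fun k hk => he (hk.le.trans hi) hi hk)
    (fun k hk => hle k (hk.trans hi)) fun _ _ => Iff.rfl,
    fun i hi => eq_of_forall_ge_iff fun M => ?_, eq_of_forall_ge_iff fun M => ?_⟩
  · have hlow : ∀ k, A k → d' k ≤ d k ∧ (d k = d' k ∨ d k + 1 ≤ d' i) := fun k hAk => by
      rcases lt_trichotomy k r with hk | rfl | hk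
      · have : e k < e r := he hk.le Set.self_mem_Iic hk
        have : d' (r + 1) ≤ d' i := hd' hi
        have := hle k hk.le
        have := hle r le_rfl
        omega
      · exact absurd hAk hr
      · exact ⟨(hgt k hk).ge, Or.inl (hgt k hk)⟩
    rw [depthStep_le_iff, depthStep_le_iff, hgt i hi]
    clear he hle hgt
    grind
  · rw [depthStep_le_iff, depthStep_le_iff, hrr]
    clear he hle hgt
    grind

theorem strictMonoOn_update_succ {e : ℕ → ℕ} (he : StrictMonoOn e (Set.Iic r)) (hM : e r < M) :
    StrictMonoOn (Function.update e (r + 1) M) (Set.Iic (r + 1)) := by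
  intro k _ i hi hki
  have hk : k ≤ r := Nat.lt_succ_iff.1 (hki.trans_le hi)
  rw [Function.update_of_ne (by omega)]
  rcases (Set.mem_Iic.1 hi).eq_or_lt with rfl | hi
  · rw [Function.update_self]
    exact (he.monotoneOn hk Set.self_mem_Iic hk).trans_lt hM
  · rw [Function.update_of_ne hi.ne]
    exact he hk (Nat.lt_succ_iff.1 hi) hki

theorem Carry.bump (h : Carry d d' r) (hd : Monotone d) (hs : d (r + 2) ≤ d (r + 1) + 1)
    (hd' : Monotone d') (hr : A r) (hA : ∀ k, k ≠ r → k ≠ r + 1 → (A k ↔ A' k))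
    (hnext : d' (r + 1) + 1 ≤ depthStep c A' d' (r + 2)) :
    Carry (depthStep c A d) (depthStep c A' d') (r + 1) := by
  obtain ⟨e, he, hle, hgt, hrr⟩ := h
  have hr1 : d (r + 1) = d' (r + 1) := hgt _ r.lt_succ_self
  have hlow : ∀ k ≤ r, d' k ≤ d k ∧ d k ≤ d' (r + 1) := fun k hk => by
    have := hd hk
    have := hle k hk
    omega
  have her : e r ≤ d' (r + 1) := by
    have := hle r le_rfl
    omega
  -- The new value `d' (r + 1) + 1 = d r + 1` is the depth of the chains that end with the letter in
  -- row `r` before it is bumped.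
  refine ⟨Function.update e (r + 1) (d' (r + 1) + 1),
    strictMonoOn_update_succ he (Nat.lt_succ_of_le her), fun i hi => ?_,
    fun i hi => le_antisymm (depthStep_le_iff.2 ?_) (depthStep_le_iff.2 ?_),
    eq_of_forall_ge_iff fun M => ?_⟩
  · rcases hi.eq_or_lt with rfl | hi
    · refine eq_of_forall_ge_iff fun M => ?_
      rw [Function.update_self, max_le_iff, depthStep_le_iff, depthStep_le_iff, hr1]
      clear he hle hgt
      grind
    · have hne : ∀ k ≤ i, k ≠ r + 1 := fun k hk => by omega
      rw [Function.update_of_ne (hne i le_rfl)]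
      exact depthStep_eq_max (fun k hk => he (show k ≤ r by omega) (show i ≤ r by omega) hk)
        (fun k hk => hle k (by omega)) fun k hk => hA k (by omega) (by omega)
  · have hM := hnext.trans (monotone_depthStep hd' (Nat.succ_le_of_lt hi))
    obtain ⟨hc, hi', hk⟩ := le_depthStep c A' d' i
    grind
  · obtain ⟨hc, hi', hk⟩ := le_depthStep c A d i
    have := hk r (by omega) hr
    clear he hle
    grind
  · rw [depthStep_le_iff, depthStep_le_iff]
    clear he hle hgt
    grind

theorem carry_enter (hs : d 1 ≤ d 0 + 1) (h0 : A' 0)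
    (hAA' : ∀ k, k ≠ 0 → (A k ↔ A' k)) :
    Carry (depthStep (max c (d 0 + 1)) A d) (depthStep c A' d) 0 := by
  refine ⟨fun _ => d 0 + 1, fun _ _ _ _ _ => by simp_all, fun i hi => ?_,
    fun i hi => eq_of_forall_ge_iff fun M => ?_, eq_of_forall_ge_iff fun M => ?_⟩
  · rw [Nat.le_zero.1 hi, depthStep_zero, depthStep_zero]
    grind
  · rw [depthStep_le_iff, depthStep_le_iff]
    grind
  · rw [depthStep_le_iff, depthStep_le_iff]
    grind

end Depth

section Insert

variable {G : ℕ → ℕ} {x : ℕ} {o : Option ℕ} {L : List Shape} {μ ν : Shape} {r r₀ : ℕ}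

theorem depth_cons (G : ℕ → ℕ) (ν : Shape) (L : List Shape) :
    depth G (ν :: L) = depthStep (G (L.length + 1)) (fun k => ν k ≠ top L k) (depth G L) := rfl

theorem monotone_depth (G : ℕ → ℕ) (L : List Shape) : Monotone (depth G L) := by
  induction L with
  | nil => exact monotone_const
  | cons ν L ih => exact monotone_depthStep ih

theorem depth_succ_le (G : ℕ → ℕ) (L : List Shape) (i : ℕ) :
    depth G L (i + 1) ≤ depth G L i + 1 := by
  induction L generalizing i with
  | nil => exact Nat.le_succ _
  | cons ν L ih => exact depthStep_succ_le (monotone_depth G L) ih i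

theorem le_depth (G : ℕ → ℕ) (L : List Shape) (i : ℕ) : G L.length ≤ depth G L i := by
  cases L with
  | nil => exact le_rfl
  | cons ν L => exact (le_depthStep _ _ _ i).1

theorem depth_zero (hG : Monotone G) (L : List Shape) : depth G L 0 = G L.length := by
  induction L with
  | nil => rfl
  | cons ν L ih =>
    rw [depth, depthStep_zero, ih, List.length_cons, max_eq_left (hG (Nat.le_succ _))]

theorem depth_congr {F : ℕ → ℕ} (h : ∀ q ≤ L.length, F q = G q) : depth F L = depth G L := by
  induction L with
  | nil => exact funext fun _ => h 0 le_rfl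
  | cons ν L ih =>
    funext i
    rw [depth, depth, ih fun q hq => h q (hq.trans (Nat.le_succ _)), h (L.length + 1) le_rfl]

theorem monotone_step (hG : Monotone G) (o : Option ℕ) : Monotone (step o G) := by
  rcases o with _ | x
  · exact hG
  · intro p q hpq
    have := hG hpq
    simp only [step]
    split_ifs <;> omega

theorem depth_step_of_outcome_eq_none (h : outcome o L = none) :
    depth (step o G) L = depth G L := by
  rw [outcome_eq_none_iff] at h
  refine depth_congr fun q hq => ?_
  rcases o with _ | x
  · rfl
  · exact if_neg (hq.trans (h x rfl)).not_gt

theorem depth_step_cons (hx : x < L.length) (i : ℕ) :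
    depth (step (some x) G) (ν :: L) i =
      depthStep (G (L.length + 1)) (fun k => ν k ≠ top L k) (depth (step (some x) G) L) i := by
  have hle : G x + 1 ≤ depth (step (some x) G) L i :=
    le_trans (by simp [step, hx]) (le_depth _ L i)
  have hstep : step (some x) G (L.length + 1) = max (G (L.length + 1)) (G x + 1) :=
    if_pos (hx.trans (Nat.lt_succ_self _))
  refine eq_of_forall_ge_iff fun M => ?_
  rw [depth, depthStep_le_iff, depthStep_le_iff, hstep, max_le_iff]
  exact ⟨fun h => ⟨h.1.1, h.2⟩, fun h => ⟨⟨h.1, hle.trans h.2.1⟩, h.2⟩⟩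

theorem le_depth_cons (G : ℕ → ℕ) (ν : Shape) (L : List Shape) (i : ℕ) :
    G (L.length + 1) ≤ depth G (ν :: L) i ∧ depth G L i ≤ depth G (ν :: L) i ∧
      ∀ k < i, ν k ≠ top L k → depth G L k + 1 ≤ depth G (ν :: L) i :=
  le_depthStep _ _ _ i

/-- Two rows of equal length end in the same column, so a vertical chain can use both of them
only by passing over a cell further down. -/
theorem depth_of_row_eq (hL : IsTableau L) (hr : top L (r + 1) = top L r) :
    depth G L (r + 1) = depth G L r ∨ depth G L (r + 1) + 1 ≤ depth G L (r + 2) := by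
  induction L with
  | nil => exact Or.inl rfl
  | cons ν L ih =>
    obtain ⟨hR, hL⟩ := hL
    have hr : ν (r + 1) = ν r := hr
    have := hR r
    have hR1 := hR (r + 1)
    have hmono : depth G (ν :: L) r ≤ depth G (ν :: L) (r + 1) := monotone_depth _ _ r.le_succ
    obtain ⟨hc, hd, hk⟩ := le_depth_cons G ν L r
    obtain ⟨-, hd2, hk2⟩ := le_depth_cons G ν L (r + 2)
    have hnext : depth G L (r + 1) = depth G L r ∨
        depth G L (r + 1) + 1 ≤ depth G (ν :: L) (r + 2) := by
      by_cases hA : ν (r + 1) = top L (r + 1)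
      · exact (ih hL (by omega)).imp_right hd2.trans'
      · exact Or.inr (hk2 (r + 1) (by omega) hA)
    have hle : depth G (ν :: L) (r + 1) ≤ max (depth G (ν :: L) r) (depth G L (r + 1)) :=
      depthStep_le_iff.2 ⟨le_max_of_le_left hc, le_max_right _ _, fun k hkr hAk =>
        le_max_of_le_left (hk k (by grind) hAk)⟩
    omega

/-- The row `r₀` is where the bumping path of an insertion with outcome `l` enters the last column:
the rows `r₀, …, l.row` have the same length. If the terminating cell is new, then
`r₀ = l.row`. -/
def IsEndRow (l : Label) (σ : Shape) (r₀ : ℕ) : Prop :=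
  r₀ ≤ l.row ∧ σ r₀ = σ l.row ∧ (l.grows = true → r₀ = l.row)

theorem exists_isEndRow_pushLabel {hit : Prop} [Decidable hit] {s l : Label}
    (hR : IsRookStrip μ ν) (hμ : Antitone (addCell (some s) μ))
    (hs : IsCorner (some s) (addCell (some s) μ)) (h : IsEndRow s (addCell (some s) μ) r₀)
    (hl : pushLabel hit μ ν (some s) = some l) :
    (ν r₀ = μ r₀ ∧ IsEndRow l (addCell (some l) ν) r₀ ∧
        ∀ k, addCell (some l) ν k = addCell (some s) μ k ↔ ν k = μ k) ∨
      (ν r₀ ≠ μ r₀ ∧ IsEndRow l (addCell (some l) ν) (r₀ + 1) ∧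
        (∀ k, k ≠ r₀ → k ≠ r₀ + 1 →
          (addCell (some l) ν k = addCell (some s) μ k ↔ ν k = μ k)) ∧
        (addCell (some l) ν (r₀ + 1) ≠ addCell (some s) μ (r₀ + 1) ∨
          addCell (some l) ν r₀ ≠ addCell (some s) μ r₀ ∧
            addCell (some s) μ (r₀ + 1) = addCell (some s) μ r₀)) := by
  obtain ⟨g, r⟩ := s
  obtain ⟨hle, hrow, hg⟩ := h
  have := hR r₀; have := hR r; have := hR (r₀ + 1)
  rcases hle.eq_or_lt with rfl | hlt
  · simp only [pushLabel, enterRow] at hl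
    by_cases h0 : ν r₀ = μ r₀
    · refine Or.inl ⟨h0, ?_⟩
      split_ifs at hl <;> obtain rfl := Option.some.inj hl <;> simp only [IsEndRow, addCell] <;>
        grind
    · refine Or.inr ⟨h0, ?_⟩
      rw [if_pos h0] at hl
      obtain rfl := Option.some.inj hl
      simp only [IsCorner, IsEndRow, addCell] at hs ⊢
      grind
  · obtain rfl : g = false := by
      by_contra h
      exact hlt.ne (hg (by simpa using h))
    have hνr : ν r ≤ ν (r₀ + 1) := hR.antitone hlt
    have hμr : addCell (some ⟨false, r⟩) μ r ≤ addCell (some ⟨false, r⟩) μ (r₀ + 1) := hμ hlt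
    simp only [IsCorner, IsEndRow, addCell, pushLabel, enterRow, Bool.false_eq_true, false_and,
      if_false] at *
    have hr : ν r = μ r := by omega
    rw [if_neg (not_not_intro hr)] at hl
    by_cases h0 : ν r₀ = μ r₀
    · refine Or.inl ⟨h0, ?_⟩
      split_ifs at hl <;> obtain rfl := Option.some.inj hl <;> simp only <;> grind
    · refine Or.inr ⟨h0, ?_⟩
      split_ifs at hl <;> obtain rfl := Option.some.inj hl <;> simp only <;> grind

theorem exists_carry_of_outcome_eq_none {l : Label} (hG : Monotone G) (hR : IsRookStrip (top L) ν)
    (hx : outcome (some x) L = none) (hl : outcome (some x) (ν :: L) = some l) :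
    IsEndRow l (top (insert (some x) (ν :: L))) 0 ∧
      Carry (depth (step (some x) G) (ν :: L)) (depth G (insert (some x) (ν :: L))) 0 := by
  obtain rfl : x = L.length := by
    have h1 := outcome_eq_none_iff.1 hx
    have h2 := hl.symm ▸ outcome_eq_none_iff (x := some x) (L := ν :: L)
    simp only [Option.mem_some_iff, forall_eq', reduceCtorEq, List.length_cons, false_iff,
      not_le] at h1 h2
    omega
  have hins := insert_of_outcome_eq_none hx
  have hd0 := depth_zero hG L
  have hstep : step (some L.length) G (L.length + 1) =
      max (G (L.length + 1)) (depth G L 0 + 1) := hd0 ▸ if_pos (Nat.lt_succ_self _)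
  obtain rfl : enterRow (top L) ν 0 = l := by simpa [outcome, hx, pushLabel] using hl
  refine ⟨⟨le_rfl, rfl, fun _ => rfl⟩, ?_⟩
  rw [insert, hl, hins, depth_cons, depth_cons, hstep, depth_step_of_outcome_eq_none hx]
  have := hR 0
  exact carry_enter (depth_succ_le G L 0) (by simp only [addCell, enterRow]; grind)
    (by simp only [addCell, enterRow]; grind)

theorem exists_carry {l : Label} (hG : Monotone G) (hL : IsTableau L)
    (hl : outcome (some x) L = some l) :
    ∃ r₀, IsEndRow l (top (insert (some x) L)) r₀ ∧
      Carry (depth (step (some x) G) L) (depth G (insert (some x) L)) r₀ := by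
  induction L generalizing l with
  | nil => cases hl
  | cons ν L ih =>
    obtain ⟨hR, hL⟩ := hL
    rcases hs : outcome (some x) L with _ | s
    · exact ⟨0, exists_carry_of_outcome_eq_none hG hR hs hl⟩
    obtain ⟨r₀, hrow, hcarry⟩ := ih hL hs
    have hx : x < L.length := by simpa [hs] using outcome_eq_none_iff (x := some x) (L := L)
    have hL' : IsTableau (insert (some x) L) := hL.insert
    have htop : top (insert (some x) L) = addCell (some s) (top L) := hs ▸ top_insert
    have hcorner : IsCorner (some s) (addCell (some s) (top L)) :=
      htop ▸ hs ▸ hL.isCorner_outcome (x := some x)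
    have hanti : Antitone (addCell (some s) (top L)) := htop ▸ hL'.isShape_top.1
    have hpush : pushLabel (some x = some L.length) (top L) ν (some s) = some l := hs ▸ hl
    rw [htop] at hrow
    rw [funext (depth_step_cons hx), insert, hl, depth_cons, length_insert, htop]
    rcases exists_isEndRow_pushLabel hR hanti hcorner hrow hpush with
      ⟨h0, hrow', hA⟩ | ⟨h0, hrow', hA, hnext⟩
    · refine ⟨r₀, hrow', ?_⟩
      simp only [ne_eq, hA]
      exact hcarry.stay (monotone_depth _ _) (not_not_intro h0)
    · refine ⟨r₀ + 1, hrow', hcarry.bump (monotone_depth _ _) (depth_succ_le _ _ _)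
        (monotone_depth _ _) h0 (fun k hk hk' => not_congr (hA k hk hk').symm) ?_⟩
      obtain ⟨-, hd2, hk2⟩ := le_depthStep (G (L.length + 1))
        (fun k => addCell (some l) ν k ≠ addCell (some s) (top L) k)
        (depth G (insert (some x) L)) (r₀ + 2)
      rcases hnext with hnext | ⟨hnext, hblock⟩
      · exact hk2 _ (by omega) hnext
      · rcases depth_of_row_eq (G := G) hL' (htop ▸ hblock) with h | h
        · exact h ▸ hk2 _ (by omega) hnext
        · exact h.trans hd2

theorem top_length (hL : IsTableau L) : top L L.length = 0 := by
  induction L with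
  | nil => rfl
  | cons ν L ih => exact Nat.le_zero.1 ((hL.1 _).2.trans (ih hL.2).le)

theorem depth_insert (hG : Monotone G) (hL : IsTableau L) {i : ℕ} (hi : L.length ≤ i) :
    depth G (insert o L) i = depth (step o G) L i := by
  rcases hl : outcome o L with _ | l
  · rw [insert_of_outcome_eq_none hl, depth_step_of_outcome_eq_none hl]
  rcases o with _ | x
  · simp [outcome_eq_none_iff.2] at hl
  obtain ⟨r₀, ⟨hle, -⟩, e, -, -, hgt, -⟩ := exists_carry hG hL hl
  refine (hgt i (hle.trans_lt (lt_of_lt_of_le ?_ hi))).symm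
  have hcorner : top (insert (some x) L) (l.row + 1) < top (insert (some x) L) l.row := by
    simpa [hl, IsCorner] using hL.isCorner_outcome (x := some x)
  by_contra! hlt
  have := (hL.insert (x := some x)).isShape_top.1 hlt
  have := top_length (hL.insert (x := some x))
  rw [length_insert] at this
  omega

theorem depth_replicate (hG : Monotone G) (q i : ℕ) : depth G (List.replicate q 0) i = G q := by
  induction q generalizing i with
  | zero => rfl
  | succ q ih =>
    have htop : top (List.replicate q 0) = 0 := by cases q <;> rfl
    have : G q ≤ G (q + 1) := hG q.le_succ
    refine eq_of_forall_ge_iff fun M => ?_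
    rw [List.replicate_succ, depth, depthStep_le_iff, ih, htop, List.length_replicate]
    simp only [Pi.zero_apply, ne_eq, not_true_eq_false, false_imp_iff, implies_true, and_true]
    omega

theorem depth_tableau (hG : Monotone G) {q i : ℕ} (hi : q ≤ i) (w : List (Option ℕ)) :
    depth G (tableau q w) i = w.foldl (fun G o => step o G) G q := by
  induction w generalizing G with
  | nil => exact depth_replicate hG q i
  | cons o w ih =>
    rw [tableau_cons, depth_insert hG (isTableau_tableau q w) (by simpa using hi),
      ih (monotone_step hG o), List.foldl_cons]

theorem lt_depth_zero_iff (hL : IsTableau L) {i j : ℕ} :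
    j < depth 0 L i ↔ j < i ∧ 0 < top L j := by
  induction L generalizing i j with
  | nil => simp [depth, top]
  | cons ν L ih =>
    obtain ⟨hR, hL⟩ := hL
    have hnew : ∀ k, ν k ≠ top L k → 0 < ν k := fun k hk => by
      have := hR k
      omega
    have hle : ∀ k, j ≤ depth 0 L k ↔ j = 0 ∨ j - 1 < k ∧ 0 < top L (j - 1) := fun k => by
      rw [← ih hL]
      omega
    have hrow : j ≠ 0 → ν j ≤ top L (j - 1) := fun hj => by
      simpa [Nat.sub_add_cancel (Nat.pos_of_ne_zero hj)] using (hR (j - 1)).2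
    have hν : ∀ k, j ≤ k → ν k ≤ ν j := fun k hk => hR.antitone hk
    have := hR j
    rw [← not_le, depth, depthStep_le_iff, ← not_lt (a := j) (b := depth 0 L i), ih hL]
    simp only [Pi.zero_apply, Nat.zero_le, true_and, Nat.succ_le_iff, ← not_le (a := j), hle]
    clear ih hle
    rw [show top (ν :: L) = ν from rfl]
    grind

theorem foldl_step_eq_conj (q : ℕ) (w : List (Option ℕ)) :
    w.foldl (fun G o => step o G) 0 q = conj (top (tableau q w)) 0 := by
  rw [← depth_tableau (G := 0) monotone_const le_rfl]
  refine eq_of_forall_lt_iff fun j => ?_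
  have hL := isTableau_tableau q w
  rw [lt_depth_zero_iff hL, lt_conj_iff hL.isShape_top, and_iff_right_iff_imp]
  intro hj
  by_contra! hle
  have := top_length hL
  rw [length_tableau] at this
  have := hL.isShape_top.1 hle
  omega

end Insert

section Chains

/-- `k` pairs `(i a, j a)`, listed by increasing right component, such that `w` has the letter
`i a` in position `j a`, all left components precede all right ones, and the left components
are `r`-increasing. For `r = (· < ·)` this is a `k`-crossing and for `r = (· > ·)` a `k`-nesting of
the linked partition encoded by `w`. -/
def HasChain (r : ℕ → ℕ → Prop) (w : List (Option ℕ)) (k : ℕ) : Prop :=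
  ∃ i j : Fin k → ℕ, (∀ a b, a < b → r (i a) (i b)) ∧ StrictMono j ∧ (∀ a b, i a < j b) ∧
    ∀ a, w[j a]? = some (some (i a))

variable {r : ℕ → ℕ → Prop} {w : List (Option ℕ)} {k q : ℕ}

theorem le_step_iff {o : Option ℕ} {G : ℕ → ℕ} :
    k ≤ step o G q ↔ k ≤ G q ∨ ∃ x ∈ o, x < q ∧ k ≤ G x + 1 := by
  rcases o with _ | x
  · simp [step]
  · by_cases hx : x < q <;> simp [step, hx]

theorem le_foldr_step_iff :
    k ≤ w.foldr step 0 q ↔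
      ∃ c : List ℕ, (c.map some).Sublist w ∧ (q :: c).Pairwise (· > ·) ∧ c.length = k := by
  induction w generalizing q k with
  | nil =>
    refine ⟨fun h => ⟨[], by simp, by simp, (Nat.le_zero.1 h).symm⟩, ?_⟩
    rintro ⟨c, hc, -, rfl⟩
    simp_all
  | cons o w ih =>
    rw [List.foldr_cons, le_step_iff, ih]
    constructor
    · rintro (⟨c, hc, hq, hk⟩ | ⟨x, rfl, hxq, hk⟩)
      · exact ⟨c, hc.cons _, hq, hk⟩
      · rcases k with _ | k
        · exact ⟨[], by simp⟩
        · obtain ⟨c, hc, hx, rfl⟩ := ih.1 (Nat.le_of_succ_le_succ hk)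
          exact ⟨x :: c, hc.cons_cons _, List.pairwise_cons_cons_iff_of_trans.2 ⟨hxq, hx⟩, rfl⟩
    · rintro ⟨c, hc, hq, hk⟩
      rcases List.sublist_cons_iff.1 hc with hc | ⟨u, hu, huw⟩
      · exact Or.inl ⟨c, hc, hq, hk⟩
      · obtain ⟨x, c, rfl, rfl, rfl⟩ := List.map_eq_cons_iff.1 hu
        obtain ⟨hq, hx⟩ := List.pairwise_cons.1 hq
        exact Or.inr ⟨x, rfl, hq x List.mem_cons_self,
          hk.ge.trans (Nat.succ_le_succ (ih.2 ⟨c, huw, hx, rfl⟩))⟩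

theorem le_foldl_step_iff :
    k ≤ w.foldl (fun G o => step o G) 0 q ↔
      ∃ c : List ℕ, (c.map some).Sublist w ∧ (c.Pairwise (· < ·) ∧ ∀ x ∈ c, x < q) ∧
        c.length = k := by
  rw [← List.foldr_reverse, le_foldr_step_iff, List.reverse_involutive.surjective.exists]
  simp only [List.map_reverse, List.reverse_sublist, List.pairwise_cons, List.pairwise_reverse,
    List.mem_reverse, List.length_reverse, and_comm (a := ∀ x ∈ _, x < q)]

theorem hasChain_iff_exists_sublist_drop :
    HasChain r w k ↔ ∃ p, ∃ c : List ℕ, (c.map some).Sublist (w.drop p) ∧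
      (c.Pairwise r ∧ ∀ x ∈ c, x < p) ∧ c.length = k := by
  constructor
  · rintro ⟨i, j, hr, hj, hij, hw⟩
    have hp : ∀ a, (Finset.univ.sup fun a => i a + 1) ≤ j a := fun b =>
      Finset.sup_le fun a _ => hij a b
    set p := Finset.univ.sup fun a => i a + 1
    have hlen : ∀ a, j a - p < (w.drop p).length := fun a => by
      have := (List.getElem?_eq_some_iff.1 (hw a)).1
      have := hp a
      rw [List.length_drop]
      omega
    refine ⟨p, List.ofFn i, ?_, ⟨List.pairwise_ofFn.2 hr, ?_⟩, List.length_ofFn⟩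
    · have hmap : (List.ofFn i).map some =
          (List.ofFn fun a => (⟨j a - p, hlen a⟩ : Fin _)).map ((w.drop p)[·]) := by
        rw [List.map_ofFn, List.map_ofFn]
        refine congrArg List.ofFn (funext fun a => ?_)
        simp [Nat.add_sub_cancel' (hp a), (List.getElem?_eq_some_iff.1 (hw a)).2]
      rw [hmap]
      refine List.map_getElem_sublist (List.pairwise_ofFn.2 fun a b hab => ?_)
      exact Nat.sub_lt_sub_right (hp a) (hj hab)
    · exact List.forall_mem_ofFn_iff.2 fun a =>
        Finset.le_sup (f := fun a => i a + 1) (Finset.mem_univ a)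
  · rintro ⟨p, c, hc, ⟨hr, hp⟩, rfl⟩
    obtain ⟨e, he⟩ := List.sublist_iff_exists_orderEmbedding_getElem?_eq.1 hc
    refine ⟨fun a => c.get a, fun a => p + e a, fun a b => List.pairwise_iff_getElem.1 hr a b _ _,
      fun a b hab => Nat.add_lt_add_left (e.strictMono hab) p,
      fun a b => Nat.lt_add_right _ (hp _ (List.get_mem _ _)), fun a => ?_⟩
    rw [← List.getElem?_drop, ← he a]
    simp

theorem hasChain_gt_iff : HasChain (· > ·) w k ↔ ∃ p, k ≤ top (tableau p (w.drop p)) 0 := by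
  simp only [hasChain_iff_exists_sublist_drop, top_tableau_zero, le_foldr_step_iff,
    List.pairwise_cons, and_comm (a := List.Pairwise _ _), gt_iff_lt]

theorem hasChain_lt_iff :
    HasChain (· < ·) w k ↔ ∃ p, k ≤ conj (top (tableau p (w.drop p))) 0 := by
  simp only [hasChain_iff_exists_sublist_drop, ← foldl_step_eq_conj, le_foldl_step_iff]

theorem hasChain_lt_conjWord : HasChain (· < ·) (conjWord w) k ↔ HasChain (· > ·) w k := by
  simp only [hasChain_gt_iff, hasChain_lt_iff, top_tableau_drop_conjWord,
    conj_conj (isShape_tableau _ _)]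

end Chains

end HeckeInsertion

namespace LinkedPartition

open HeckeInsertion (IsAdmissible isAdmissible_iff HasChain conjWord isAdmissible_conjWord
  length_conjWord conjWord_conjWord hasChain_lt_conjWord some_mem_conjWord_iff
  getElem?_conjWord_eq_some_none_iff)

/-! ### Linked partitions -/

section StandardRepresentation

variable {n : ℕ} {R : Set (Fin n × Fin n)} {P : LinkedPartition n} {B C : Finset (Fin n)}
  {i i' j : Fin n}

open Classical in
/-- The block with minimum `i` of the linked partition with standard representation `R`. -/
noncomputable def blockOf (R : Set (Fin n × Fin n)) (i : Fin n) : Finset (Fin n) :=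
  {j | j = i ∨ (i, j) ∈ R}

/-- `i` is the minimum of a block of the linked partition with standard representation `R`: a
singleton block only occurs if its element lies in no other block. -/
def IsBlockMin (R : Set (Fin n × Fin n)) (i : Fin n) : Prop :=
  (∃ j, (i, j) ∈ R) ∨ ∀ k, (k, i) ∉ R

theorem mem_blockOf : j ∈ blockOf R i ↔ j = i ∨ (i, j) ∈ R := by simp [blockOf]

theorem self_mem_blockOf (R : Set (Fin n × Fin n)) (i : Fin n) : i ∈ blockOf R i :=
  mem_blockOf.2 (Or.inl rfl)

theorem mem_stdRep_iff :
    (i, j) ∈ P.stdRep ↔ ∃ B ∈ P.blocks, IsLeast (B : Set (Fin n)) i ∧ j ∈ B ∧ i < j :=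
  ⟨fun ⟨B, hB, hi, hj, hmin, hlt⟩ => ⟨B, hB, ⟨hi, hmin⟩, hj, hlt⟩,
    fun ⟨B, hB, ⟨hi, hmin⟩, hj, hlt⟩ => ⟨B, hB, hi, hj, hmin, hlt⟩⟩

theorem lt_of_mem_stdRep (h : (i, j) ∈ P.stdRep) : i < j := by
  obtain ⟨_, _, _, _, hlt⟩ := mem_stdRep_iff.1 h
  exact hlt

theorem eq_of_mem_stdRep (h : (i, j) ∈ P.stdRep) (h' : (i', j) ∈ P.stdRep) : i = i' := by
  obtain ⟨B, hB, hi, hj, hlt⟩ := mem_stdRep_iff.1 h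
  obtain ⟨C, hC, hi', hj', hlt'⟩ := mem_stdRep_iff.1 h'
  by_cases hBC : B = C
  · subst hBC
    exact hi.unique hi'
  · rcases P.nearlyDisjoint B hB C hC hBC j (Finset.mem_inter.2 ⟨hj, hj'⟩) with ⟨hle, -⟩ | ⟨hle, -⟩
    · exact absurd (hle i hi.1) hlt.not_ge
    · exact absurd (hle i' hi'.1) hlt'.not_ge

theorem eq_of_isLeast (hB : B ∈ P.blocks) (hC : C ∈ P.blocks) (hiB : IsLeast (B : Set (Fin n)) i)
    (hiC : IsLeast (C : Set (Fin n)) i) : B = C := by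
  by_contra hBC
  rcases P.nearlyDisjoint B hB C hC hBC i (Finset.mem_inter.2 ⟨hiB.1, hiC.1⟩) with
    ⟨-, -, c, hc, hlt⟩ | ⟨-, -, b, hb, hlt⟩
  · exact absurd (hiC.2 hc) hlt.not_ge
  · exact absurd (hiB.2 hb) hlt.not_ge

theorem blockOf_stdRep (hB : B ∈ P.blocks) (hi : IsLeast (B : Set (Fin n)) i) :
    blockOf P.stdRep i = B := by
  ext j
  rw [mem_blockOf, mem_stdRep_iff]
  constructor
  · rintro (rfl | ⟨C, hC, hiC, hj, -⟩)
    · exact hi.1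
    · exact eq_of_isLeast hB hC hi hiC ▸ hj
  · exact fun hj => (hi.2 hj).eq_or_lt.imp Eq.symm fun hlt => ⟨B, hB, hi, hj, hlt⟩

theorem isBlockMin_stdRep (hB : B ∈ P.blocks) (hi : IsLeast (B : Set (Fin n)) i) :
    IsBlockMin P.stdRep i := by
  refine or_iff_not_imp_right.2 fun h => ?_
  push Not at h
  obtain ⟨k, hk⟩ := h
  obtain ⟨C, hC, hkC, hiC, hlt⟩ := mem_stdRep_iff.1 hk
  have hBC : B ≠ C := by
    rintro rfl
    exact hlt.ne (hkC.unique hi)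
  rcases P.nearlyDisjoint B hB C hC hBC i (Finset.mem_inter.2 ⟨hi.1, hiC⟩) with
    ⟨-, hcard, -⟩ | ⟨hle, -⟩
  · obtain ⟨j, hj, hne⟩ := Finset.exists_mem_ne hcard i
    exact ⟨j, mem_stdRep_iff.2 ⟨B, hB, hi, hj, lt_of_le_of_ne (hi.2 hj) hne.symm⟩⟩
  · exact absurd (hle k hkC.1) hlt.not_ge

theorem mem_blocks_iff :
    B ∈ P.blocks ↔ ∃ i, IsBlockMin P.stdRep i ∧ blockOf P.stdRep i = B := by
  constructor
  · intro hB
    have hi := B.isLeast_min' (P.nonempty B hB)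
    exact ⟨_, isBlockMin_stdRep hB hi, blockOf_stdRep hB hi⟩
  · rintro ⟨i, ⟨j, hj⟩ | hi, rfl⟩
    · obtain ⟨C, hC, hiC, -⟩ := mem_stdRep_iff.1 hj
      rwa [blockOf_stdRep hC hiC]
    · obtain ⟨C, hC, hiC⟩ := P.cover i
      have hm := C.isLeast_min' ⟨i, hiC⟩
      rcases (hm.2 hiC).eq_or_lt with hmi | hlt
      · rwa [blockOf_stdRep hC (hmi ▸ hm)]
      · exact absurd (mem_stdRep_iff.2 ⟨C, hC, hm, hiC, hlt⟩) (hi _)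

theorem stdRep_injective : Function.Injective (stdRep : LinkedPartition n → _) := by
  intro P Q h
  have hb : P.blocks = Q.blocks := Finset.ext fun B => by rw [mem_blocks_iff, mem_blocks_iff, h]
  cases P
  cases Q
  congr

theorem exists_isBlockMin_mem_blockOf (R : Set (Fin n × Fin n)) (i : Fin n) :
    ∃ k, IsBlockMin R k ∧ i ∈ blockOf R k := by
  by_cases h : ∃ k, (k, i) ∈ R
  · obtain ⟨k, hk⟩ := h
    exact ⟨k, Or.inl ⟨i, hk⟩, mem_blockOf.2 (Or.inr hk)⟩
  · exact ⟨i, Or.inr (not_exists.1 h), self_mem_blockOf R i⟩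

theorem isLeast_blockOf (hlt : ∀ i j, (i, j) ∈ R → i < j) (i : Fin n) :
    IsLeast (blockOf R i : Set (Fin n)) i :=
  ⟨self_mem_blockOf R i, fun _ hj => (mem_blockOf.1 hj).elim (fun h => h.ge)
    fun h => (hlt _ _ h).le⟩

theorem nearlyDisjoint_blockOf (hlt : ∀ i j, (i, j) ∈ R → i < j) (hi : IsBlockMin R i)
    (h : (i', i) ∈ R) :
    (∀ b ∈ blockOf R i, i ≤ b) ∧ 1 < (blockOf R i).card ∧ ∃ c ∈ blockOf R i', c < i := by
  obtain ⟨j, hj⟩ := hi.resolve_right fun hi => hi i' h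
  exact ⟨(isLeast_blockOf hlt i).2, Finset.one_lt_card.2 ⟨i, self_mem_blockOf R i, j,
    mem_blockOf.2 (Or.inr hj), (hlt i j hj).ne⟩, i', self_mem_blockOf R i', hlt i' i h⟩

theorem mem_image_blockOf_iff [DecidablePred (IsBlockMin R)] :
    B ∈ ({i | IsBlockMin R i} : Finset (Fin n)).image (blockOf R) ↔
      ∃ i, IsBlockMin R i ∧ blockOf R i = B := by
  simp

open Classical in
/-- The linked partition with standard representation `R`. -/
noncomputable def ofStdRep (R : Set (Fin n × Fin n)) (hlt : ∀ i j, (i, j) ∈ R → i < j)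
    (huniq : ∀ i i' j, (i, j) ∈ R → (i', j) ∈ R → i = i') : LinkedPartition n where
  blocks := ({i | IsBlockMin R i} : Finset (Fin n)).image (blockOf R)
  nonempty B hB := by
    obtain ⟨i, -, rfl⟩ := mem_image_blockOf_iff.1 hB
    exact ⟨i, self_mem_blockOf R i⟩
  cover i := by
    obtain ⟨k, hk, hik⟩ := exists_isBlockMin_mem_blockOf R i
    exact ⟨_, mem_image_blockOf_iff.2 ⟨k, hk, rfl⟩, hik⟩
  nearlyDisjoint B hB C hC hBC t ht := by
    obtain ⟨i, hi, rfl⟩ := mem_image_blockOf_iff.1 hB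
    obtain ⟨k, hk, rfl⟩ := mem_image_blockOf_iff.1 hC
    obtain ⟨hti, htk⟩ := Finset.mem_inter.1 ht
    rcases mem_blockOf.1 hti with rfl | hti <;> rcases mem_blockOf.1 htk with rfl | htk
    · exact absurd rfl hBC
    · exact Or.inl (nearlyDisjoint_blockOf hlt hi htk)
    · exact Or.inr (nearlyDisjoint_blockOf hlt hk hti)
    · exact absurd (congrArg (blockOf R) (huniq _ _ _ hti htk)) hBC

theorem stdRep_ofStdRep (hlt : ∀ i j, (i, j) ∈ R → i < j)
    (huniq : ∀ i i' j, (i, j) ∈ R → (i', j) ∈ R → i = i') :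
    (ofStdRep R hlt huniq).stdRep = R := by
  classical
  ext ⟨i, j⟩
  rw [mem_stdRep_iff]
  constructor
  · rintro ⟨B, hB, hi, hj, hij⟩
    obtain ⟨k, -, rfl⟩ := mem_image_blockOf_iff.1 hB
    obtain rfl := hi.unique (isLeast_blockOf hlt k)
    exact (mem_blockOf.1 hj).resolve_left hij.ne'
  · intro h
    exact ⟨_, mem_image_blockOf_iff.2 ⟨i, Or.inl ⟨j, h⟩, rfl⟩, isLeast_blockOf hlt i,
      mem_blockOf.2 (Or.inr h), hlt i j h⟩

end StandardRepresentation

section Word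

variable {n k : ℕ} {P : LinkedPartition n} {r : ℕ → ℕ → Prop} {i j : Fin n}

open Classical in
/-- The word encoding a linked partition: its letter in position `j` is the unique `i` with
`(i, j)` in the standard representation, and `none` if there is no such `i`. -/
noncomputable def word (P : LinkedPartition n) : List (Option ℕ) :=
  List.ofFn fun j => if h : ∃ i, (i, j) ∈ P.stdRep then some (h.choose : ℕ) else none

theorem length_word (P : LinkedPartition n) : P.word.length = n := List.length_ofFn

theorem getElem?_word_eq_some_some_iff {x p : ℕ} :
    P.word[p]? = some (some x) ↔ ∃ i j : Fin n, (i, j) ∈ P.stdRep ∧ i.val = x ∧ j.val = p := by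
  rcases lt_or_ge p n with hp | hp
  · simp only [word, List.getElem?_ofFn, dif_pos hp, Option.some_inj]
    constructor
    · intro h
      split_ifs at h with hi
      exact ⟨hi.choose, ⟨p, hp⟩, hi.choose_spec, Option.some_inj.1 h, rfl⟩
    · rintro ⟨i, j, hij, rfl, rfl⟩
      have h : ∃ i, (i, j) ∈ P.stdRep := ⟨i, hij⟩
      rw [dif_pos h, eq_of_mem_stdRep hij h.choose_spec]
  · rw [List.getElem?_eq_none ((length_word P).trans_le hp)]
    refine ⟨fun h => by simp at h, ?_⟩
    rintro ⟨i, j, -, -, rfl⟩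
    exact absurd j.isLt hp.not_gt

theorem getElem?_word : P.word[j.val]? = some (some i.val) ↔ (i, j) ∈ P.stdRep := by
  rw [getElem?_word_eq_some_some_iff]
  constructor
  · rintro ⟨i', j', h, hi, hj⟩
    rwa [← Fin.ext hi, ← Fin.ext hj]
  · exact fun h => ⟨i, j, h, rfl, rfl⟩

theorem isAdmissible_word (P : LinkedPartition n) : IsAdmissible 0 P.word := by
  refine isAdmissible_iff.2 fun p x h => ?_
  obtain ⟨i, j, hij, rfl, rfl⟩ := getElem?_word_eq_some_some_iff.1 h
  simpa using lt_of_mem_stdRep hij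

theorem word_injective : Function.Injective (word : LinkedPartition n → _) := by
  refine fun P Q h => stdRep_injective (Set.ext fun ⟨i, j⟩ => ?_)
  rw [← getElem?_word, ← getElem?_word, h]

theorem exists_word_eq {w : List (Option ℕ)} (hw : IsAdmissible 0 w) (hn : w.length = n) :
    ∃ P : LinkedPartition n, P.word = w := by
  rw [isAdmissible_iff] at hw
  set P := ofStdRep {p : Fin n × Fin n | w[p.2.val]? = some (some p.1.val)}
    (fun i j h => by simpa using hw _ _ h)
    (fun i i' j (h : w[j.val]? = _) (h' : w[j.val]? = _) => Fin.ext (by simp_all)) with hP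
  have hiff : ∀ p x, P.word[p]? = some (some x) ↔ w[p]? = some (some x) := fun p x => by
    rw [getElem?_word_eq_some_some_iff, hP, stdRep_ofStdRep]
    constructor
    · rintro ⟨i, j, h, rfl, rfl⟩
      exact h
    · intro h
      have hp : p < n := hn ▸ (List.getElem?_eq_some_iff.1 h).1
      exact ⟨⟨x, by have := hw p x h; omega⟩, ⟨p, hp⟩, h, rfl, rfl⟩
  refine ⟨P, List.ext_getElem ((length_word P).trans hn.symm) fun p hp hp' =>
    Option.ext fun x => ?_⟩
  simpa [List.getElem?_eq_getElem hp, List.getElem?_eq_getElem hp'] using hiff p x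

theorem mem_compl_iff : i ∈ P.compl ↔ some i.val ∈ P.word := by
  rw [List.mem_iff_getElem?]
  constructor
  · rintro ⟨j, hj⟩
    exact ⟨j, getElem?_word.2 hj⟩
  · rintro ⟨p, hp⟩
    obtain ⟨i', j, h, hi, -⟩ := getElem?_word_eq_some_some_iff.1 hp
    exact ⟨j, Fin.ext hi ▸ h⟩

theorem mem_compr_iff : j ∈ P.compr ↔ P.word[j.val]? ≠ some none := by
  have hj := List.getElem?_eq_getElem (j.isLt.trans_eq (length_word P).symm)
  constructor
  · rintro ⟨i, hi⟩
    simp [getElem?_word.2 hi]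
  · intro h
    obtain ⟨x, hx⟩ := Option.ne_none_iff_exists'.1 fun h0 => h (hj.trans (congrArg some h0))
    obtain ⟨i, j', hij, -, hj'⟩ := getElem?_word_eq_some_some_iff.1 (hj.trans (congrArg some hx))
    exact ⟨i, Fin.ext hj' ▸ hij⟩

theorem hasChain_word_iff :
    HasChain r P.word k ↔ ∃ f : Fin k → Fin n × Fin n, (∀ a, f a ∈ P.stdRep) ∧
      (∀ ⦃a b⦄, a < b → r (f a).1 (f b).1) ∧ StrictMono (fun a => (f a).2) ∧
      ∀ a b, (f a).1 < (f b).2 := by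
  constructor
  · rintro ⟨x, p, hr, hp, hxp, hw⟩
    choose i j hij hi hj using fun a => getElem?_word_eq_some_some_iff.1 (hw a)
    obtain rfl : (fun a => (i a).val) = x := funext hi
    obtain rfl : (fun a => (j a).val) = p := funext hj
    exact ⟨fun a => (i a, j a), hij, hr, hp, hxp⟩
  · rintro ⟨f, hf, hr, hmono, hlt⟩
    exact ⟨fun a => (f a).1, fun a => (f a).2, hr, hmono, hlt, fun a => getElem?_word.2 (hf a)⟩

theorem cross_eq_sSup (P : LinkedPartition n) :
    P.cross = sSup {k | HasChain (· < ·) P.word k} := by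
  refine congrArg sSup (Set.ext fun k => Iff.trans ?_ hasChain_word_iff.symm)
  exact exists_congr fun f => Iff.rfl

theorem nest_eq_sSup (P : LinkedPartition n) :
    P.nest = sSup {k | HasChain (· > ·) P.word k} := by
  refine congrArg sSup (Set.ext fun k => Iff.trans ?_ hasChain_word_iff.symm)
  constructor
  · rintro ⟨f, hf, hleft, hright, hlt⟩
    exact ⟨f ∘ Fin.rev, fun a => hf _, fun a b h => hleft (Fin.rev_lt_rev.2 h),
      fun a b h => hright (Fin.rev_lt_rev.2 h), fun a b => hlt _ _⟩
  · rintro ⟨f, hf, hleft, hright, hlt⟩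
    exact ⟨f ∘ Fin.rev, fun a => hf _, fun a b h => hleft (Fin.rev_lt_rev.2 h),
      fun a b h => hright (Fin.rev_lt_rev.2 h), fun a b => hlt _ _⟩

end Word

section Conjugate

variable {n : ℕ}

theorem exists_word_eq_conjWord (P : LinkedPartition n) :
    ∃ Q : LinkedPartition n, Q.word = conjWord P.word :=
  exists_word_eq isAdmissible_conjWord
    (length_conjWord.trans (length_word P))

/-- The linked partition encoded by the conjugate word; conjugation is the involution realizing
the symmetry between crossings and nestings. -/
noncomputable def conjugate (P : LinkedPartition n) : LinkedPartition n :=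
  (exists_word_eq_conjWord P).choose

theorem word_conjugate (P : LinkedPartition n) : P.conjugate.word = conjWord P.word :=
  (exists_word_eq_conjWord P).choose_spec

theorem conjugate_involutive : Function.Involutive (conjugate : LinkedPartition n → _) :=
  fun P => word_injective <| by
    rw [word_conjugate, word_conjugate, conjWord_conjWord (isAdmissible_word P)]

theorem cross_conjugate (P : LinkedPartition n) : P.conjugate.cross = P.nest := by
  simp only [cross_eq_sSup, nest_eq_sSup, word_conjugate, hasChain_lt_conjWord]

theorem nest_conjugate (P : LinkedPartition n) : P.conjugate.nest = P.cross := by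
  rw [← cross_conjugate, conjugate_involutive P]

theorem compl_conjugate (P : LinkedPartition n) : P.conjugate.compl = P.compl := by
  ext i
  rw [mem_compl_iff, mem_compl_iff, word_conjugate,
    some_mem_conjWord_iff (isAdmissible_word P)]

theorem compr_conjugate (P : LinkedPartition n) : P.conjugate.compr = P.compr := by
  ext j
  rw [mem_compr_iff, mem_compr_iff, word_conjugate, ne_eq, ne_eq,
    getElem?_conjWord_eq_some_none_iff (isAdmissible_word P)]

end Conjugate

end LinkedPartition

/-- The number of linked partitions of `[n]` with crossing number `x`, nesting
number `y`, left-component set `S` and right-component set `T` equals the number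
with crossing number `y`, nesting number `x` and the same component sets. -/
theorem linkedPartition_symmetry (n x y : ℕ) (S T : Set (Fin n)) :
    {P : LinkedPartition n |
        P.cross = x ∧ P.nest = y ∧ P.compl = S ∧ P.compr = T}.ncard =
    {P : LinkedPartition n |
        P.cross = y ∧ P.nest = x ∧ P.compl = S ∧ P.compr = T}.ncard := by
  refine Set.ncard_congr (fun P _ => P.conjugate) ?_ ?_ ?_
  · rintro P ⟨hcross, hnest, hcompl, hcompr⟩
    exact ⟨P.cross_conjugate.trans hnest, P.nest_conjugate.trans hcross,
      P.compl_conjugate.trans hcompl, P.compr_conjugate.trans hcompr⟩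
  · exact fun P Q _ _ h => LinkedPartition.conjugate_involutive.injective h
  · rintro Q ⟨hcross, hnest, hcompl, hcompr⟩
    exact ⟨Q.conjugate, ⟨Q.cross_conjugate.trans hnest, Q.nest_conjugate.trans hcross,
      Q.compl_conjugate.trans hcompl, Q.compr_conjugate.trans hcompr⟩,
      LinkedPartition.conjugate_involutive Q⟩
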